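/- arXiv:2009.12272 — 2 statements merged into one kernel-verified Lean document; each statement's English description precedes it below -/
import Mathlib

section
/- Let H : [0,1] → ℝ be continuous with 0 < H(x) < 1; set H_min := min_{[0,1]} H, h := H − H_min, D := {x ∈ [0,1] : h(x) = 0}, 𝔪 := H_min + 1/2. Assume there are σ, s₀ > 0 and a slowly varying function φ such that Leb{x ∈ [0,1] : 0 < h(x) < s} = s^σ·φ(1/s) for all 0 < s < s₀. Then, as t → ∞, (∫₀¹ t^{1/(H(x)+1/2)} dx − t^{1/𝔪}·Leb(D)) / (t^{1/𝔪} · 𝔪^{2σ} · Γ(σ+1) · (log t)^{−σ} · φ(log t)) → 1. -/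
open MeasureTheory Set Filter
open scoped ENNReal NNReal Real

noncomputable section

/-!
Let `H` be the denominator of the exponent, `m` its minimum and `g = 1/m - 1/H ≥ 0`. Splitting off
the set where `H = m`, what remains of the integral is `t^(1/m) ∫ exp (-(log t) g)` over `{m < H}`.
This is a Laplace transform in `log t`, so by Karamata's Abelian theorem it is asymptotic to
`Γ(σ+1)` times the distribution function of `g` at `1 / log t`, as soon as the latter varies
regularly at `0` with index `σ`. Now `g < s` means `H - m < m² s / (1 - m s)`, so this distribution
function is that of `H - m` after a change of variable with slope `m²` at `0`: it inherits regular
variation and picks up the factor `m^(2σ)`.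
-/

open scoped Topology

section RegularVariation

/-- `F` is regularly varying at `0⁺` with index `σ` (slowly varying if `σ = 0`). Nothing is assumed
about the sign of `F`; by the case `c = 1`, the condition forces `F ≠ 0` near `0⁺`. -/
def RegularlyVaryingAtZero (F : ℝ → ℝ) (σ : ℝ) : Prop :=
  ∀ c : ℝ, 0 < c → Tendsto (fun s => F (c * s) / F s) (𝓝[>] 0) (𝓝 (c ^ σ))

lemma tendsto_const_mul_nhdsGT_zero {c : ℝ} (hc : 0 < c) :
    Tendsto (fun s : ℝ => c * s) (𝓝[>] 0) (𝓝[>] 0) :=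
  tendsto_iff_comap.2 (comap_mulLeft_nhdsGT_zero hc).ge

variable {F G : ℝ → ℝ} {σ : ℝ}

lemma regularlyVaryingAtZero_of_eventually_eq_rpow_mul {φ : ℝ → ℝ}
    (hφ : ∀ c : ℝ, 0 < c → Tendsto (fun u => φ (c * u) / φ u) atTop (𝓝 1))
    (hF : ∀ᶠ s in 𝓝[>] 0, F s = s ^ σ * φ (1 / s)) : RegularlyVaryingAtZero F σ := by
  intro c hc
  have hlim : Tendsto (fun s => c ^ σ * (φ (c⁻¹ * s⁻¹) / φ s⁻¹)) (𝓝[>] 0) (𝓝 (c ^ σ)) := by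
    simpa only [mul_one, Function.comp_def] using
      ((hφ c⁻¹ (inv_pos.2 hc)).comp tendsto_inv_nhdsGT_zero).const_mul (c ^ σ)
  refine hlim.congr' ?_
  filter_upwards [hF, (tendsto_const_mul_nhdsGT_zero hc).eventually hF, self_mem_nhdsWithin]
    with s hs hcs (hs0 : 0 < s)
  rw [hs, hcs, Real.mul_rpow hc.le hs0.le, one_div, one_div, mul_inv, mul_right_comm,
    mul_comm (s ^ σ), mul_div_mul_right _ _ (Real.rpow_pos_of_pos hs0 σ).ne', mul_div_assoc]

namespace RegularlyVaryingAtZero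

lemma eventually_ne_zero (hF : RegularlyVaryingAtZero F σ) : ∀ᶠ s in 𝓝[>] 0, F s ≠ 0 := by
  have hone := hF 1 one_pos
  rw [Real.one_rpow] at hone
  filter_upwards [hone.eventually_ne one_ne_zero] with s hs using (div_ne_zero_iff.1 hs).2

lemma pos (hF : RegularlyVaryingAtZero F σ) (hmono : Monotone F) (hnonneg : 0 ≤ F) {s : ℝ}
    (hs : 0 < s) : 0 < F s := by
  obtain ⟨r, hr, hrs⟩ := (hF.eventually_ne_zero.and (Ioo_mem_nhdsGT hs)).exists
  exact ((hnonneg r).lt_of_ne' hr).trans_le (hmono hrs.2.le)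

lemma index_nonneg (hF : RegularlyVaryingAtZero F σ) (hmono : Monotone F) (hnonneg : 0 ≤ F) :
    0 ≤ σ := by
  have htwo : (1 : ℝ) ≤ 2 ^ σ := by
    refine ge_of_tendsto (hF 2 two_pos) ?_
    filter_upwards [self_mem_nhdsWithin] with s (hs : 0 < s)
    exact (one_le_div (hF.pos hmono hnonneg hs)).2 (hmono (by linarith))
  rwa [← Real.rpow_zero 2, Real.rpow_le_rpow_left_iff one_lt_two] at htwo

lemma of_tendsto_div {k : ℝ} (hF : RegularlyVaryingAtZero F σ) (hk : k ≠ 0)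
    (hGF : Tendsto (fun s => G s / F s) (𝓝[>] 0) (𝓝 k)) : RegularlyVaryingAtZero G σ := by
  intro c hc
  have hcs := tendsto_const_mul_nhdsGT_zero hc
  have hlim := ((hGF.comp hcs).mul (hF c hc)).div hGF hk
  rw [mul_div_cancel_left₀ _ hk] at hlim
  refine hlim.congr' ?_
  filter_upwards [hF.eventually_ne_zero, hcs.eventually hF.eventually_ne_zero] with s hs hcs
  simp only [Pi.div_apply, Function.comp_apply]
  rw [div_mul_div_cancel₀ hcs, div_div_div_cancel_right₀ hs]

lemma tendsto_comp_div {r : ℝ → ℝ} {c : ℝ} (hF : RegularlyVaryingAtZero F σ)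
    (hmono : Monotone F) (hnonneg : 0 ≤ F) (hc : 0 < c)
    (hr : Tendsto (fun s => r s / s) (𝓝[>] 0) (𝓝 c)) :
    Tendsto (fun s => F (r s) / F s) (𝓝[>] 0) (𝓝 (c ^ σ)) := by
  have hcont : Tendsto (fun b : ℝ => b ^ σ) (𝓝 c) (𝓝 (c ^ σ)) :=
    Real.continuousAt_rpow_const c σ (Or.inl hc.ne')
  refine tendsto_order.2 ⟨fun a ha => ?_, fun a ha => ?_⟩
  · obtain ⟨b, hab, hb, hbc⟩ : ∃ b, a < b ^ σ ∧ 0 < b ∧ b < c :=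
      (((hcont.eventually_const_lt ha).filter_mono nhdsWithin_le_nhds).and
        (Ioo_mem_nhdsLT hc)).exists
    filter_upwards [(hF b hb).eventually_const_lt hab, hr.eventually_const_lt hbc,
      self_mem_nhdsWithin] with s has hbr (hs : 0 < s)
    have hle : b * s ≤ r s := ((lt_div_iff₀ hs).1 hbr).le
    exact has.trans_le (div_le_div_of_nonneg_right (hmono hle) (hnonneg s))
  · obtain ⟨b, hab, hcb⟩ : ∃ b, b ^ σ < a ∧ b ∈ Ioi c :=
      (((hcont.eventually_lt_const ha).filter_mono nhdsWithin_le_nhds).and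
        (self_mem_nhdsWithin (s := Ioi c))).exists
    filter_upwards [(hF b (hc.trans hcb)).eventually_lt_const hab, hr.eventually_lt_const hcb,
      self_mem_nhdsWithin] with s has hbr (hs : 0 < s)
    have hle : r s ≤ b * s := ((div_lt_iff₀ hs).1 hbr).le
    exact (div_le_div_of_nonneg_right (hmono hle) (hnonneg s)).trans_lt has

lemma exists_two_mul_le (hF : RegularlyVaryingAtZero F σ) (hmono : Monotone F)
    (hnonneg : 0 ≤ F) {M : ℝ} (hM : ∀ s, F s ≤ M) :
    ∃ A : ℝ, ∀ s, 0 < s → F (2 * s) ≤ A * F s := by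
  have hsmall : ∀ᶠ s in 𝓝[>] 0, F (2 * s) / F s < 2 ^ σ + 1 :=
    (hF 2 two_pos).eventually_lt_const (lt_add_one _)
  obtain ⟨s₁, hs₁ : 0 < s₁, hlt⟩ := mem_nhdsGT_iff_exists_Ioo_subset.1 hsmall
  have hFs₁ : 0 < F s₁ := hF.pos hmono hnonneg hs₁
  refine ⟨max (2 ^ σ + 1) (M / F s₁), fun s hs => ?_⟩
  have hFs : 0 < F s := hF.pos hmono hnonneg hs
  rcases lt_or_ge s s₁ with hss₁ | hs₁s
  · calc F (2 * s) ≤ (2 ^ σ + 1) * F s := ((div_lt_iff₀ hFs).1 (hlt ⟨hs, hss₁⟩)).le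
      _ ≤ max (2 ^ σ + 1) (M / F s₁) * F s := by gcongr; exact le_max_left _ _
  · calc F (2 * s) ≤ M / F s₁ * F s₁ := by rw [div_mul_cancel₀ _ hFs₁.ne']; exact hM _
      _ ≤ max (2 ^ σ + 1) (M / F s₁) * F s₁ := by gcongr; exact le_max_right _ _
      _ ≤ max (2 ^ σ + 1) (M / F s₁) * F s := by
        refine mul_le_mul_of_nonneg_left (hmono hs₁s) (le_max_of_le_left ?_)
        positivity

end RegularlyVaryingAtZero

lemma exists_forall_mul_le_pow_mul_of_two_mul_le (hmono : Monotone F) (hnonneg : 0 ≤ F) {A : ℝ}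
    (hA : ∀ s, 0 < s → F (2 * s) ≤ A * F s) :
    ∃ p : ℕ, ∀ s u : ℝ, 0 < s → 0 ≤ u → F (u * s) ≤ (2 * (1 + u)) ^ p * F s := by
  obtain ⟨p, hp⟩ := pow_unbounded_of_one_lt A (one_lt_two (α := ℝ))
  have hdyadic : ∀ (k : ℕ) (s : ℝ), 0 < s → F (2 ^ k * s) ≤ (2 ^ k) ^ p * F s := by
    intro k
    induction k with
    | zero => intro s _; simp
    | succ k ih =>
      intro s hs
      calc F (2 ^ (k + 1) * s) = F (2 * (2 ^ k * s)) := by ring_nf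
        _ ≤ A * F (2 ^ k * s) := hA _ (by positivity)
        _ ≤ 2 ^ p * F (2 ^ k * s) := mul_le_mul_of_nonneg_right hp.le (hnonneg _)
        _ ≤ 2 ^ p * ((2 ^ k) ^ p * F s) := by gcongr; exact ih s hs
        _ = (2 ^ (k + 1)) ^ p * F s := by rw [pow_succ (2 : ℝ) k, mul_pow]; ring
  refine ⟨p, fun s u hs hu => ?_⟩
  obtain ⟨k, hk, hk'⟩ := exists_nat_pow_near (by linarith : (1 : ℝ) ≤ 1 + u) one_lt_two
  calc F (u * s) ≤ F (2 ^ (k + 1) * s) := hmono (by gcongr; linarith)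
    _ ≤ (2 ^ (k + 1)) ^ p * F s := hdyadic _ _ hs
    _ ≤ (2 * (1 + u)) ^ p * F s := by
      refine mul_le_mul_of_nonneg_right (pow_le_pow_left₀ (by positivity) ?_ p) (hnonneg s)
      rw [pow_succ]; linarith

end RegularVariation

section KaramataAbelian

lemma integrableOn_exp_neg_mul_two_mul_one_add_pow (p : ℕ) :
    IntegrableOn (fun u : ℝ => Real.exp (-u) * (2 * (1 + u)) ^ p) (Ioi 0) := by
  refine integrable_of_isBigO_exp_neg (b := 1 / 2) one_half_pos (by fun_prop) ?_
  have hlinear : (fun u : ℝ => 2 * (1 + u)) =O[atTop] (fun u : ℝ => u) := by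
    refine Asymptotics.IsBigO.of_bound 4 ?_
    filter_upwards [eventually_ge_atTop 1] with u hu
    rw [Real.norm_of_nonneg (by linarith), Real.norm_of_nonneg (by linarith)]
    linarith
  have hpow : (fun u : ℝ => (2 * (1 + u)) ^ p) =O[atTop] (fun u => Real.exp (1 / 2 * u)) :=
    (hlinear.pow p).trans (isLittleO_pow_exp_pos_mul_atTop p one_half_pos).isBigO
  refine ((Asymptotics.isBigO_refl (fun u : ℝ => Real.exp (-u)) atTop).mul hpow).congr_right
    fun u => ?_
  rw [← Real.exp_add]
  ring_nf

lemma RegularlyVaryingAtZero.tendsto_integral_exp_neg_mul_div {F : ℝ → ℝ} {σ M : ℝ}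
    (hF : RegularlyVaryingAtZero F σ) (hmono : Monotone F) (hnonneg : 0 ≤ F)
    (hM : ∀ s, F s ≤ M) :
    Tendsto (fun s => ∫ u in Ioi 0, Real.exp (-u) * (F (u * s) / F s)) (𝓝[>] 0)
      (𝓝 (Real.Gamma (σ + 1))) := by
  obtain ⟨A, hA⟩ := hF.exists_two_mul_le hmono hnonneg hM
  obtain ⟨p, hp⟩ := exists_forall_mul_le_pow_mul_of_two_mul_le hmono hnonneg hA
  rw [Real.Gamma_eq_integral (by linarith [hF.index_nonneg hmono hnonneg]), add_sub_cancel_right]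
  refine tendsto_integral_filter_of_dominated_convergence _ ?_ ?_
    (integrableOn_exp_neg_mul_two_mul_one_add_pow p) ?_
  · have hmeas := hmono.measurable
    exact Eventually.of_forall fun s => by fun_prop
  · filter_upwards [self_mem_nhdsWithin] with s (hs : 0 < s)
    filter_upwards [ae_restrict_mem measurableSet_Ioi] with u (hu : 0 < u)
    rw [norm_mul, Real.norm_of_nonneg (Real.exp_pos _).le,
      Real.norm_of_nonneg (div_nonneg (hnonneg _) (hnonneg _))]
    gcongr
    exact (div_le_iff₀ (hF.pos hmono hnonneg hs)).2 (hp s u hs hu.le)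
  · filter_upwards [ae_restrict_mem measurableSet_Ioi] with u hu
    exact (hF u hu).const_mul _

variable {α : Type*} [MeasurableSpace α] {μ : Measure α}

lemma integral_exp_neg_eq_integral_measureReal_lt {g : α → ℝ}
    (hg : Integrable (fun x => Real.exp (-g x)) μ) :
    ∫ x, Real.exp (-g x) ∂μ = ∫ u, Real.exp (-u) * μ.real {x | g x < u} := by
  have hrange : (fun u : ℝ => Real.exp (-u)) '' univ = Ioi 0 := by
    rw [image_univ, ← Real.range_exp]
    exact neg_surjective.range_comp Real.exp
  have hderiv : ∀ u ∈ (univ : Set ℝ),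
      HasDerivWithinAt (fun u => Real.exp (-u)) (-Real.exp (-u)) univ u := fun u _ => by
    simpa only [mul_neg_one] using (hasDerivAt_neg u).exp.hasDerivWithinAt
  have hanti : AntitoneOn (fun u : ℝ => Real.exp (-u)) univ := fun u _ v _ huv =>
    Real.exp_le_exp.2 (neg_le_neg huv)
  rw [hg.integral_eq_integral_meas_lt (Eventually.of_forall fun x => (Real.exp_pos _).le),
    ← hrange, integral_image_eq_integral_deriv_smul_of_antitoneOn .univ hderiv hanti]
  simp only [neg_neg, smul_eq_mul, Real.exp_lt_exp, neg_lt_neg_iff, setIntegral_univ]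

lemma measureReal_restrict_setOf₀ {S : Set α} (hS : NullMeasurableSet S μ) (p : α → Prop) :
    (μ.restrict S).real {x | p x} = μ.real {x | x ∈ S ∧ p x} := by
  rw [measureReal_def, Measure.restrict_apply₀' hS, inter_comm]
  rfl

lemma monotone_measureReal_lt [IsFiniteMeasure μ] (g : α → ℝ) :
    Monotone fun s => μ.real {x | g x < s} :=
  fun _ _ hst => measureReal_mono fun _ hx => lt_of_lt_of_le hx hst

/-- Karamata's Abelian theorem for Laplace transforms. -/
theorem tendsto_integral_exp_neg_div_measureReal_lt [IsFiniteMeasure μ] {g : α → ℝ} {σ : ℝ}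
    (hg : AEMeasurable g μ) (hg_nonneg : 0 ≤ᵐ[μ] g)
    (hF : RegularlyVaryingAtZero (fun s => μ.real {x | g x < s}) σ) :
    Tendsto (fun s => (∫ x, Real.exp (-(g x / s)) ∂μ) / μ.real {x | g x < s}) (𝓝[>] 0)
      (𝓝 (Real.Gamma (σ + 1))) := by
  have hlim := hF.tendsto_integral_exp_neg_mul_div (monotone_measureReal_lt g)
    (fun _ => measureReal_nonneg) (fun _ => measureReal_mono (subset_univ _))
  refine hlim.congr' ?_
  filter_upwards [self_mem_nhdsWithin] with s (hs : 0 < s)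
  have hint : Integrable (fun x => Real.exp (-(g x / s))) μ := by
    refine .of_bound (by fun_prop) 1 ?_
    filter_upwards [hg_nonneg] with x (hx : 0 ≤ g x)
    rw [Real.norm_of_nonneg (Real.exp_pos _).le, Real.exp_le_one_iff, neg_nonpos]
    positivity
  have hzero : ∀ u ∉ Ioi (0 : ℝ), Real.exp (-u) * μ.real {x | g x < u * s} = 0 := by
    intro u hu
    have hnull : ∀ᵐ x ∂μ, x ∉ {x | g x < u * s} := by
      filter_upwards [hg_nonneg] with x hx
      exact not_lt.2 ((mul_nonpos_of_nonpos_of_nonneg (not_lt.1 hu) hs.le).trans hx)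
    rw [measureReal_def, measure_eq_zero_iff_ae_notMem.2 hnull, ENNReal.toReal_zero, mul_zero]
  rw [integral_exp_neg_eq_integral_measureReal_lt hint]
  simp only [div_lt_iff₀ hs, ← mul_div_assoc]
  rw [integral_div, setIntegral_eq_integral_of_forall_compl_eq_zero hzero]

end KaramataAbelian

section PowerIntegral

lemma one_div_sub_one_div_lt_iff {m y s : ℝ} (hm : 0 < m) (hy : m < y) (hs : m * s < 1) :
    1 / m - 1 / y < s ↔ y - m < m ^ 2 * s / (1 - m * s) := by
  have hy0 : 0 < y := hm.trans hy
  rw [div_sub_div _ _ hm.ne' hy0.ne', div_lt_iff₀ (by positivity), lt_div_iff₀ (by linarith)]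
  constructor <;> intro h <;> linarith

lemma tendsto_sq_mul_div_one_sub_mul_div (m : ℝ) :
    Tendsto (fun s : ℝ => m ^ 2 * s / (1 - m * s) / s) (𝓝[>] 0) (𝓝 (m ^ 2)) := by
  have hcont : ContinuousAt (fun s : ℝ => m ^ 2 / (1 - m * s)) 0 :=
    continuousAt_const.div (by fun_prop) (by simp)
  have hlim : Tendsto (fun s : ℝ => m ^ 2 / (1 - m * s)) (𝓝[>] 0) (𝓝 (m ^ 2)) := by
    simpa using hcont.tendsto.mono_left nhdsWithin_le_nhds
  refine hlim.congr' ?_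
  filter_upwards [self_mem_nhdsWithin] with s (hs : 0 < s)
  rw [div_right_comm, mul_div_cancel_right₀ _ hs.ne']

variable {α : Type*} [MeasurableSpace α] {μ : Measure α} [IsFiniteMeasure μ] {H : α → ℝ} {m : ℝ}

lemma integrable_rpow_one_div {t : ℝ} (ht : 1 ≤ t) (hH : AEMeasurable H μ) (hm : 0 < m)
    (hmH : ∀ᵐ x ∂μ, m ≤ H x) : Integrable (fun x => t ^ (1 / H x)) μ := by
  refine .of_bound ((hH.const_div 1).const_pow t).aestronglyMeasurable (t ^ (1 / m)) ?_
  filter_upwards [hmH] with x hx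
  rw [Real.norm_of_nonneg (by positivity)]
  gcongr

lemma integral_rpow_one_div_sub {t : ℝ} (ht : 1 ≤ t) (hH : AEMeasurable H μ) (hm : 0 < m)
    (hmH : ∀ᵐ x ∂μ, m ≤ H x) :
    (∫ x, t ^ (1 / H x) ∂μ) - t ^ (1 / m) * μ.real {x | H x = m} =
      t ^ (1 / m) * ∫ x in {x | m < H x}, Real.exp (-((1 / m - 1 / H x) * Real.log t)) ∂μ := by
  have hP : NullMeasurableSet {x | m < H x} μ := nullMeasurableSet_lt aemeasurable_const hH
  have hcompl : ({x | m < H x}ᶜ : Set α) =ᵐ[μ] {x | H x = m} := by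
    filter_upwards [hmH] with x hx
    exact propext (not_lt.trans hx.ge_iff_eq')
  have hmin : ∫ x in {x | H x = m}, t ^ (1 / H x) ∂μ = t ^ (1 / m) * μ.real {x | H x = m} := by
    have hconst : ∀ᵐ x ∂μ.restrict {x | H x = m}, t ^ (1 / H x) = t ^ (1 / m) := by
      filter_upwards [ae_restrict_mem₀ (nullMeasurableSet_eq_fun hH aemeasurable_const)]
        with x (hx : H x = m)
      rw [hx]
    rw [integral_congr_ae hconst, setIntegral_const, smul_eq_mul, mul_comm]
  rw [← integral_add_compl₀ hP (integrable_rpow_one_div ht hH hm hmH),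
    setIntegral_congr_set hcompl, hmin, add_sub_cancel_right, ← integral_const_mul]
  refine integral_congr_ae (Eventually.of_forall fun x => ?_)
  have ht0 : 0 < t := by linarith
  simp only [Real.rpow_def_of_pos ht0, ← Real.exp_add]
  ring_nf

lemma monotone_measureReal_pos_and_lt (h : α → ℝ) :
    Monotone fun s => μ.real {x | 0 < h x ∧ h x < s} :=
  fun _ _ hst => measureReal_mono fun _ hx => ⟨hx.1, hx.2.trans_le hst⟩

lemma tendsto_measureReal_one_div_sub_lt_div {σ : ℝ} (hm : 0 < m)
    (hF : RegularlyVaryingAtZero (fun s => μ.real {x | 0 < H x - m ∧ H x - m < s}) σ) :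
    Tendsto (fun s => μ.real {x | m < H x ∧ 1 / m - 1 / H x < s} /
      μ.real {x | 0 < H x - m ∧ H x - m < s}) (𝓝[>] 0) (𝓝 (m ^ (2 * σ))) := by
  have hlim := hF.tendsto_comp_div (monotone_measureReal_pos_and_lt _)
    (fun _ => measureReal_nonneg) (by positivity) (tendsto_sq_mul_div_one_sub_mul_div m)
  rw [Real.rpow_mul hm.le, Real.rpow_two]
  refine hlim.congr' ?_
  filter_upwards [Ioo_mem_nhdsGT (one_div_pos.2 hm)] with s hs
  have hms : m * s < 1 := by simpa only [mul_comm] using (lt_div_iff₀ hm).1 hs.2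
  congr 2
  ext x
  simp only [mem_ofPred_eq, sub_pos]
  exact and_congr_right fun hx => (one_div_sub_one_div_lt_iff hm hx hms).symm

lemma tendsto_setIntegral_exp_neg_one_div_sub {σ : ℝ} (hH : AEMeasurable H μ) (hm : 0 < m)
    (hF : RegularlyVaryingAtZero (fun s => μ.real {x | 0 < H x - m ∧ H x - m < s}) σ) :
    Tendsto (fun s => (∫ x in {x | m < H x}, Real.exp (-((1 / m - 1 / H x) / s)) ∂μ) /
        μ.real {x | 0 < H x - m ∧ H x - m < s}) (𝓝[>] 0)
      (𝓝 (Real.Gamma (σ + 1) * m ^ (2 * σ))) := by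
  have hP : NullMeasurableSet {x | m < H x} μ := nullMeasurableSet_lt aemeasurable_const hH
  have hratio : Tendsto (fun s => (μ.restrict {x | m < H x}).real {x | 1 / m - 1 / H x < s} /
      μ.real {x | 0 < H x - m ∧ H x - m < s}) (𝓝[>] 0) (𝓝 (m ^ (2 * σ))) := by
    simpa only [measureReal_restrict_setOf₀ hP, mem_ofPred_eq] using
      tendsto_measureReal_one_div_sub_lt_div hm hF
  have hRV := hF.of_tendsto_div (Real.rpow_pos_of_pos hm _).ne' hratio
  have hg_nonneg : 0 ≤ᵐ[μ.restrict {x | m < H x}] fun x => 1 / m - 1 / H x := by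
    filter_upwards [ae_restrict_mem₀ hP] with x (hx : m < H x)
    exact sub_nonneg.2 (one_div_le_one_div_of_le hm hx.le)
  have hlaplace := tendsto_integral_exp_neg_div_measureReal_lt
    (hH.restrict.const_div 1 |>.const_sub (1 / m)) hg_nonneg hRV
  refine (hlaplace.mul hratio).congr' ?_
  filter_upwards [hRV.eventually_ne_zero] with s hs using div_mul_div_cancel₀ hs

theorem laplace_asymptotics_of_integral_general {σ : ℝ} {φ : ℝ → ℝ} (hH : AEMeasurable H μ)
    (hm : 0 < m) (hmH : ∀ᵐ x ∂μ, m ≤ H x)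
    (hφslow : ∀ c : ℝ, 0 < c → Tendsto (fun u => φ (c * u) / φ u) atTop (𝓝 1))
    (hmeas : ∀ᶠ s in 𝓝[>] 0, μ.real {x | 0 < H x - m ∧ H x - m < s} = s ^ σ * φ (1 / s)) :
    Tendsto (fun t : ℝ =>
        ((∫ x, t ^ (1 / H x) ∂μ) - t ^ (1 / m) * μ.real {x | H x = m}) /
          (t ^ (1 / m) * m ^ (2 * σ) * Real.Gamma (σ + 1) * Real.log t ^ (-σ) * φ (Real.log t)))
      atTop (𝓝 1) := by
  have hF := regularlyVaryingAtZero_of_eventually_eq_rpow_mul hφslow hmeas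
  have hσ := hF.index_nonneg (monotone_measureReal_pos_and_lt _) fun _ => measureReal_nonneg
  have hconst : Real.Gamma (σ + 1) * m ^ (2 * σ) ≠ 0 :=
    (mul_pos (Real.Gamma_pos_of_pos (by linarith)) (Real.rpow_pos_of_pos hm _)).ne'
  have hlog : Tendsto (fun t => (Real.log t)⁻¹) atTop (𝓝[>] 0) :=
    tendsto_inv_atTop_nhdsGT_zero.comp Real.tendsto_log_atTop
  have hlim := ((tendsto_setIntegral_exp_neg_one_div_sub hH hm hF).comp hlog).div_const
    (Real.Gamma (σ + 1) * m ^ (2 * σ))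
  rw [div_self hconst] at hlim
  refine hlim.congr' ?_
  filter_upwards [hlog.eventually hmeas, eventually_gt_atTop 1] with t ht_meas ht
  have hlogt : 0 < Real.log t := Real.log_pos ht
  have htm : t ^ (1 / m) ≠ 0 := (Real.rpow_pos_of_pos (by linarith) _).ne'
  rw [one_div, inv_inv, Real.inv_rpow hlogt.le, ← Real.rpow_neg hlogt.le] at ht_meas
  rw [integral_rpow_one_div_sub ht.le hH hm hmH, Function.comp_apply, ht_meas, div_div]
  simp only [div_inv_eq_mul, mul_assoc]
  rw [mul_div_mul_left _ _ htm]
  congr 1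
  ring

end PowerIntegral

/-- Laplace-method asymptotics of `∫₀¹ t^{1/(H(x)+1/2)} dx` (formula (9) of the paper). -/
theorem laplace_asymptotics_of_integral
    (H : ℝ → ℝ) (hcont : ContinuousOn H (Icc 0 1))
    (hrange : ∀ x ∈ Icc (0:ℝ) 1, 0 < H x ∧ H x < 1)
    (Hmin : ℝ) (hHmin : IsLeast (H '' Icc 0 1) Hmin)
    (D : Set ℝ) (hD : D = {x | x ∈ Icc (0:ℝ) 1 ∧ H x - Hmin = 0})
    (σ s₀ : ℝ) (φ : ℝ → ℝ) (hσ : 0 < σ) (hs₀ : 0 < s₀)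
    (hφm : Measurable φ) (hφpos : ∀ u : ℝ, 0 < u → 0 < φ u)
    (hφslow : ∀ c : ℝ, 0 < c → Tendsto (fun u => φ (c * u) / φ u) atTop (nhds 1))
    (hmeas : ∀ s : ℝ, 0 < s → s < s₀ →
      (volume {x | x ∈ Icc (0:ℝ) 1 ∧ 0 < H x - Hmin ∧ H x - Hmin < s}).toReal
        = s ^ σ * φ (1 / s)) :
    Tendsto (fun t : ℝ =>
        ((∫ x in Icc (0:ℝ) 1, t ^ (1 / (H x + 1/2)))
            - t ^ (1 / (Hmin + 1/2)) * (volume D).toReal) /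
          (t ^ (1 / (Hmin + 1/2)) * (Hmin + 1/2) ^ (2*σ) * Real.Gamma (σ + 1) *
            Real.log t ^ (-σ) * φ (Real.log t)))
      atTop (nhds 1) := by
  have hm : 0 < Hmin + 1 / 2 := by
    obtain ⟨x, hx, rfl⟩ := hHmin.1
    linarith [(hrange x hx).1]
  have hmin : ∀ᵐ x ∂volume.restrict (Icc 0 1), Hmin + 1 / 2 ≤ H x + 1 / 2 := by
    filter_upwards [ae_restrict_mem measurableSet_Icc] with x hx
    exact add_le_add_left (hHmin.2 (mem_image_of_mem H hx)) _
  have hrestrict (p : ℝ → Prop) : (volume.restrict (Icc (0 : ℝ) 1)).real {x | p x} =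
      (volume {x | x ∈ Icc (0 : ℝ) 1 ∧ p x}).toReal :=
    measureReal_restrict_setOf₀ measurableSet_Icc.nullMeasurableSet p
  simpa only [hD, hrestrict, add_left_inj, sub_eq_zero] using
    laplace_asymptotics_of_integral_general
      ((hcont.aemeasurable measurableSet_Icc).add_const (1 / 2)) hm hmin hφslow (by
        filter_upwards [Ioo_mem_nhdsGT hs₀] with s hs
        simpa only [add_sub_add_right_eq_sub, hrestrict] using hmeas s hs.1 hs.2)
end
end

section
/- Fix H with 1/2 < H < 1 and define Φ(s) := ∫₀^s w^{H−3/2}·((1+w)^{H−1/2} − 1) dw for s > 0 (the integral converges). Then: (a) there exist C > 0 such that |Φ(s)| ≤ C·s^{H+1/2} and |Φ'(s)| ≤ C·s^{H−1/2} for all 0 < s ≤ 1; (b) defining Φ⁽⁰⁾ := Φ and Φ⁽ⁿ⁺¹⁾(s) := (1+s)·(d/ds)Φ⁽ⁿ⁾(s) (each Φ⁽ⁿ⁾ is smooth on (0,∞)), for every n ∈ ℕ there exists C(n) > 0 such that |Φ⁽ⁿ⁾(s)| ≤ C(n)·s^{2H−1} for all s ≥ 1. -/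
open MeasureTheory Set Filter
open scoped ENNReal NNReal Real

noncomputable section

/-- `Φ(s) = ∫₀^s w^{H-3/2}((1+w)^{H-1/2} − 1) dw`. -/
def PhiFn (H s : ℝ) : ℝ :=
  ∫ w in Ioo (0:ℝ) s, w ^ (H - 3/2) * ((1 + w) ^ (H - 1/2) - 1)

/-- The iterates `Φ⁽⁰⁾ = Φ`, `Φ⁽ⁿ⁺¹⁾(s) = (1+s)·(Φ⁽ⁿ⁾)'(s)`. -/
def PhiIter (H : ℝ) : ℕ → ℝ → ℝ
  | 0 => PhiFn H
  | n + 1 => fun s => (1 + s) * deriv (PhiIter H n) s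

/-!
Near `0`, the inequality `x ^ a - 1 ≤ a * log x * x ^ a` makes the integrand of `Φ` at most a
constant times `w ^ (H - 1 / 2)`, and integrating gives the estimate for `Φ`.

At infinity, `Φ'` is a linear combination of the functions `(1 + s) ^ p * s ^ q` with
`p + q ≤ 2 * H - 2`. Differentiation lowers the degree `p + q` of such a function by one and
multiplication by `1 + s` raises it by one, so every `Φ⁽ⁿ⁾` with `n ≥ 1` is a combination of terms
of degree at most `2 * H - 1`, and is therefore `O(s ^ (2 * H - 1))`. The function `Φ` itself is
bounded by replacing `1 + w` by `1 + s` in the integrand.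
-/

open Asymptotics

section ShiftedPower

variable {m p q s : ℝ} {f g : ℝ → ℝ}

/-- The monomial `(1 + s) ^ p * s ^ q`, of degree `p + q` as `s → ∞`. -/
def shiftedPower (p q s : ℝ) : ℝ :=
  (1 + s) ^ p * s ^ q

lemma contDiffOn_shiftedPower {n : WithTop ℕ∞} :
    ContDiffOn ℝ n (shiftedPower p q) (Ioi 0) :=
  ((contDiffOn_const.add contDiffOn_id).rpow_const_of_ne fun _ hs => (add_pos one_pos hs).ne').mul
    (contDiffOn_id.rpow_const_of_ne fun _ hs => (mem_Ioi.1 hs).ne')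

lemma one_add_mul_shiftedPower (hs : 0 < s) :
    (1 + s) * shiftedPower p q s = shiftedPower (p + 1) q s := by
  rw [shiftedPower, shiftedPower, Real.rpow_add_one (by positivity)]
  ring

lemma hasDerivAt_shiftedPower (hs : 0 < s) :
    HasDerivAt (shiftedPower p q)
      (p * shiftedPower (p - 1) q s + q * shiftedPower p (q - 1) s) s := by
  have left : HasDerivAt (fun s : ℝ => (1 + s) ^ p) (1 * p * (1 + s) ^ (p - 1)) s :=
    ((hasDerivAt_id s).const_add 1).rpow_const (.inl (by positivity))
  have right : HasDerivAt (fun s : ℝ => s ^ q) (q * s ^ (q - 1)) s :=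
    Real.hasDerivAt_rpow_const (.inl hs.ne')
  refine (left.mul right).congr_deriv ?_
  simp only [shiftedPower]
  ring

lemma shiftedPower_le (hs : 1 ≤ s) : shiftedPower p q s ≤ 2 ^ |p| * s ^ (p + q) := by
  have hs0 : 0 < s := one_pos.trans_le hs
  have one_le_ratio : 1 ≤ (1 + s) / s := (one_le_div hs0).2 (by linarith)
  have ratio_le_two : (1 + s) / s ≤ 2 := (div_le_iff₀ hs0).2 (by linarith)
  calc shiftedPower p q s
      = ((1 + s) / s) ^ p * s ^ (p + q) := by
        rw [shiftedPower, Real.div_rpow (by positivity) hs0.le, Real.rpow_add hs0]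
        field_simp
    _ ≤ ((1 + s) / s) ^ |p| * s ^ (p + q) := by
        gcongr
        exact le_abs_self p
    _ ≤ 2 ^ |p| * s ^ (p + q) := by gcongr

/-- The functions on `ℝ` that agree on `(0, ∞)` with a linear combination of monomials
`(1 + s) ^ p * s ^ q` of degree `p + q ≤ m`; their values on `(-∞, 0]` are arbitrary, so that the
space is closed under operations that have a formula only on `(0, ∞)`. -/
def shiftedPowerSpan (m : ℝ) : Submodule ℝ (ℝ → ℝ) :=
  Submodule.span ℝ {f | ∃ p q, p + q ≤ m ∧ EqOn f (shiftedPower p q) (Ioi 0)}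

lemma shiftedPower_mem_span (h : p + q ≤ m) : shiftedPower p q ∈ shiftedPowerSpan m :=
  Submodule.subset_span ⟨p, q, h, eqOn_refl _ _⟩

lemma mem_shiftedPowerSpan_congr (hf : f ∈ shiftedPowerSpan m) (hgf : EqOn g f (Ioi 0)) :
    g ∈ shiftedPowerSpan m := by
  -- `g - f` vanishes on `(0, ∞)`, so it is the difference of two generators.
  have perturbed_mem : g - f + shiftedPower m 0 ∈ shiftedPowerSpan m :=
    Submodule.subset_span ⟨m, 0, (add_zero m).le, fun s hs => by simp [hgf hs]⟩
  have monomial_mem : shiftedPower m 0 ∈ shiftedPowerSpan m :=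
    shiftedPower_mem_span (add_zero m).le
  simpa using add_mem (sub_mem perturbed_mem monomial_mem) hf

lemma contDiffOn_of_mem_shiftedPowerSpan {n : WithTop ℕ∞} (hf : f ∈ shiftedPowerSpan m) :
    ContDiffOn ℝ n f (Ioi 0) := by
  induction hf using Submodule.span_induction with
  | mem f hf =>
    obtain ⟨p, q, -, hf⟩ := hf
    exact contDiffOn_shiftedPower.congr hf
  | zero => exact contDiffOn_const
  | add f g _ _ hf hg => exact hf.add hg
  | smul c f _ hf => exact hf.const_smul c

lemma isBigO_of_mem_shiftedPowerSpan (hf : f ∈ shiftedPowerSpan m) :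
    f =O[𝓟 (Ici 1)] fun s => s ^ m := by
  induction hf using Submodule.span_induction with
  | mem f hf =>
    obtain ⟨p, q, hpq, hf⟩ := hf
    refine isBigO_principal.2 ⟨2 ^ |p|, fun s (hs : 1 ≤ s) => ?_⟩
    have hs0 : 0 < s := one_pos.trans_le hs
    have monomial_nonneg : 0 ≤ shiftedPower p q s := by unfold shiftedPower; positivity
    rw [hf hs0, Real.norm_of_nonneg monomial_nonneg, Real.norm_of_nonneg (by positivity)]
    exact (shiftedPower_le hs).trans (by gcongr)
  | zero => exact isBigO_zero _ _
  | add f g _ _ hf hg => exact hf.add hg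
  | smul c f _ hf => exact hf.const_smul_left c

lemma one_add_mul_mem_shiftedPowerSpan (hf : f ∈ shiftedPowerSpan m) :
    (fun s => (1 + s) * f s) ∈ shiftedPowerSpan (m + 1) := by
  induction hf using Submodule.span_induction with
  | mem f hf =>
    obtain ⟨p, q, hpq, hf⟩ := hf
    refine mem_shiftedPowerSpan_congr (f := shiftedPower (p + 1) q)
      (shiftedPower_mem_span (by linarith)) fun s hs => ?_
    simp only [hf hs, one_add_mul_shiftedPower hs]
  | zero => exact mem_shiftedPowerSpan_congr (zero_mem _) fun s _ => mul_zero (1 + s)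
  | add f g _ _ hf hg =>
    exact mem_shiftedPowerSpan_congr (add_mem hf hg) fun s _ => mul_add (1 + s) (f s) (g s)
  | smul c f _ hf =>
    exact mem_shiftedPowerSpan_congr (Submodule.smul_mem _ c hf) fun s _ =>
      mul_left_comm (1 + s) c (f s)

lemma deriv_mem_shiftedPowerSpan (hf : f ∈ shiftedPowerSpan m) :
    deriv f ∈ shiftedPowerSpan (m - 1) := by
  have differentiableAt_of_mem {f : ℝ → ℝ} (hf : f ∈ shiftedPowerSpan m) {s : ℝ} (hs : s ∈ Ioi 0) :
      DifferentiableAt ℝ f s :=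
    ((contDiffOn_of_mem_shiftedPowerSpan hf).differentiableOn one_ne_zero).differentiableAt
      (isOpen_Ioi.mem_nhds hs)
  induction hf using Submodule.span_induction with
  | mem f hf =>
    obtain ⟨p, q, hpq, hf⟩ := hf
    have left_mem : shiftedPower (p - 1) q ∈ shiftedPowerSpan (m - 1) :=
      shiftedPower_mem_span (by linarith)
    have right_mem : shiftedPower p (q - 1) ∈ shiftedPowerSpan (m - 1) :=
      shiftedPower_mem_span (by linarith)
    refine mem_shiftedPowerSpan_congr
      (add_mem (Submodule.smul_mem _ p left_mem) (Submodule.smul_mem _ q right_mem)) ?_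
    exact fun s hs => (hf.deriv isOpen_Ioi hs).trans (hasDerivAt_shiftedPower hs).deriv
  | zero => simp
  | add f g hf hg hf' hg' =>
    refine mem_shiftedPowerSpan_congr (add_mem hf' hg') fun s hs => ?_
    exact deriv_add (differentiableAt_of_mem hf hs) (differentiableAt_of_mem hg hs)
  | smul c f _ hf' =>
    refine mem_shiftedPowerSpan_congr (Submodule.smul_mem _ c hf') fun s _ => ?_
    exact deriv_const_smul_field c f

end ShiftedPower

section PowerBounds

variable {f : ℝ → ℝ} {a r s w C : ℝ}

lemma rpow_one_add_sub_one_le (ha : 0 ≤ a) (hw : -1 < w) :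
    (1 + w) ^ a - 1 ≤ a * w * (1 + w) ^ a := by
  have hw' : 0 < 1 + w := by linarith
  have hpow : 0 < (1 + w) ^ a := Real.rpow_pos_of_pos hw' a
  have log_le : Real.log (1 + w) ≤ w := by linarith [Real.log_le_sub_one_of_pos hw']
  calc (1 + w) ^ a - 1
      = (1 - ((1 + w) ^ a)⁻¹) * (1 + w) ^ a := by field_simp
    _ ≤ Real.log ((1 + w) ^ a) * (1 + w) ^ a := by
        gcongr
        exact Real.one_sub_inv_le_log_of_pos hpow
    _ ≤ a * w * (1 + w) ^ a := by
        rw [Real.log_rpow hw']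
        gcongr

lemma setIntegral_Ioo_rpow (hr : -1 < r) (hs : 0 ≤ s) :
    ∫ w in Ioo 0 s, w ^ r = s ^ (r + 1) / (r + 1) := by
  rw [← integral_Ioc_eq_integral_Ioo, ← intervalIntegral.integral_of_le hs,
    integral_rpow (.inl hr), Real.zero_rpow (by linarith), sub_zero]

lemma setIntegral_Ioo_le_of_le_rpow (hr : -1 < r) (hs : 0 < s) (hf : IntegrableOn f (Ioo 0 s))
    (hle : ∀ w ∈ Ioo 0 s, f w ≤ C * w ^ r) :
    ∫ w in Ioo 0 s, f w ≤ C * (s ^ (r + 1) / (r + 1)) := by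
  have integrableOn_rpow : IntegrableOn (fun w : ℝ => w ^ r) (Ioo 0 s) :=
    (intervalIntegral.integrableOn_Ioo_rpow_iff hs).2 hr
  calc ∫ w in Ioo 0 s, f w
      ≤ ∫ w in Ioo 0 s, C * w ^ r :=
        setIntegral_mono_on hf (integrableOn_rpow.const_mul C) measurableSet_Ioo hle
    _ = C * (s ^ (r + 1) / (r + 1)) := by
        rw [integral_const_mul, setIntegral_Ioo_rpow hr hs.le]

lemma hasDerivAt_setIntegral_Ioo {E : Type*} [NormedAddCommGroup E] [NormedSpace ℝ E]
    [CompleteSpace E] {f : ℝ → E} (hs : a < s) (hint : IntegrableOn f (Ioo a s))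
    (hcont : ContinuousOn f (Ioi a)) :
    HasDerivAt (fun u => ∫ w in Ioo a u, f w) (f s) s := by
  have hasDerivAt_interval : HasDerivAt (fun u => ∫ w in a..u, f w) (f s) s :=
    intervalIntegral.integral_hasDerivAt_right
      ((intervalIntegrable_iff_integrableOn_Ioo_of_le hs.le).2 hint)
      (hcont.stronglyMeasurableAtFilter isOpen_Ioi s hs)
      (hcont.continuousAt (Ioi_mem_nhds hs))
  refine hasDerivAt_interval.congr_of_eventuallyEq ?_
  filter_upwards [Ioi_mem_nhds hs] with u hu
  rw [intervalIntegral.integral_of_le (le_of_lt hu), integral_Ioc_eq_integral_Ioo]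

end PowerBounds

section Phi

variable {H s w : ℝ}

/-- The integrand `w ^ (H - 3 / 2) * ((1 + w) ^ (H - 1 / 2) - 1)` of `Φ`, which is also `Φ'`. -/
def phiKernel (H w : ℝ) : ℝ :=
  w ^ (H - 3 / 2) * ((1 + w) ^ (H - 1 / 2) - 1)

lemma phiKernel_mem_shiftedPowerSpan (hH : 1 / 2 ≤ H) :
    phiKernel H ∈ shiftedPowerSpan (2 * H - 2) := by
  have eq_sub : phiKernel H
      = shiftedPower (H - 1 / 2) (H - 3 / 2) - shiftedPower 0 (H - 3 / 2) := by
    funext w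
    simp only [phiKernel, shiftedPower, Pi.sub_apply, Real.rpow_zero]
    ring
  rw [eq_sub]
  exact sub_mem (shiftedPower_mem_span (by linarith)) (shiftedPower_mem_span (by linarith))

lemma continuousOn_phiKernel (hH : 1 / 2 ≤ H) : ContinuousOn (phiKernel H) (Ioi 0) :=
  (contDiffOn_of_mem_shiftedPowerSpan (n := 0) (phiKernel_mem_shiftedPowerSpan hH)).continuousOn

lemma phiKernel_nonneg (hH : 1 / 2 ≤ H) (hw : 0 < w) : 0 ≤ phiKernel H w :=
  mul_nonneg (Real.rpow_nonneg hw.le _)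
    (sub_nonneg.2 (Real.one_le_rpow (by linarith) (by linarith)))

lemma phiKernel_le_rpow_sub_half (hH : 1 / 2 ≤ H) (hw : 0 < w) (hws : w ≤ s) :
    phiKernel H w ≤ (H - 1 / 2) * (1 + s) ^ (H - 1 / 2) * w ^ (H - 1 / 2) := by
  have hH' : 0 ≤ H - 1 / 2 := sub_nonneg.2 hH
  have rpow_eq : w ^ (H - 1 / 2) = w ^ (H - 3 / 2) * w := by
    rw [← Real.rpow_add_one hw.ne']
    ring_nf
  calc phiKernel H w
      ≤ w ^ (H - 3 / 2) * ((H - 1 / 2) * w * (1 + w) ^ (H - 1 / 2)) := by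
        unfold phiKernel
        gcongr
        exact rpow_one_add_sub_one_le hH' (by linarith)
    _ = (H - 1 / 2) * (1 + w) ^ (H - 1 / 2) * w ^ (H - 1 / 2) := by rw [rpow_eq]; ring
    _ ≤ (H - 1 / 2) * (1 + s) ^ (H - 1 / 2) * w ^ (H - 1 / 2) := by gcongr

lemma phiKernel_le_rpow_sub_three_halves (hH : 1 / 2 ≤ H) (hw : 0 < w) (hws : w ≤ s) :
    phiKernel H w ≤ (1 + s) ^ (H - 1 / 2) * w ^ (H - 3 / 2) := by
  have : 0 ≤ H - 1 / 2 := sub_nonneg.2 hH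
  calc phiKernel H w
      ≤ w ^ (H - 3 / 2) * (1 + w) ^ (H - 1 / 2) := by
        unfold phiKernel
        gcongr
        exact sub_le_self _ zero_le_one
    _ ≤ (1 + s) ^ (H - 1 / 2) * w ^ (H - 3 / 2) := by
        rw [mul_comm]
        gcongr

lemma integrableOn_phiKernel (hH : 1 / 2 ≤ H) (hs : 0 < s) :
    IntegrableOn (phiKernel H) (Ioo 0 s) := by
  have integrableOn_rpow : IntegrableOn (fun w : ℝ => w ^ (H - 1 / 2)) (Ioo 0 s) :=
    (intervalIntegral.integrableOn_Ioo_rpow_iff hs).2 (by linarith)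
  refine (integrableOn_rpow.const_mul ((H - 1 / 2) * (1 + s) ^ (H - 1 / 2))).mono'
    (((continuousOn_phiKernel hH).mono Ioo_subset_Ioi_self).aestronglyMeasurable
      measurableSet_Ioo) ?_
  filter_upwards [ae_restrict_mem measurableSet_Ioo] with w hw
  rw [Real.norm_of_nonneg (phiKernel_nonneg hH hw.1)]
  exact phiKernel_le_rpow_sub_half hH hw.1 hw.2.le

lemma PhiFn_nonneg (hH : 1 / 2 ≤ H) : 0 ≤ PhiFn H s :=
  setIntegral_nonneg measurableSet_Ioo fun _ hw => phiKernel_nonneg hH hw.1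

lemma PhiFn_le_rpow_add_half (hH : 1 / 2 ≤ H) (hs : 0 < s) :
    PhiFn H s ≤ (H - 1 / 2) * (1 + s) ^ (H - 1 / 2) * (s ^ (H + 1 / 2) / (H + 1 / 2)) := by
  have := setIntegral_Ioo_le_of_le_rpow (by linarith) hs (integrableOn_phiKernel hH hs)
    fun w hw => phiKernel_le_rpow_sub_half hH hw.1 hw.2.le
  rwa [show H - 1 / 2 + 1 = H + 1 / 2 by ring] at this

lemma PhiFn_le_shiftedPower (hH : 1 / 2 < H) (hs : 0 < s) :
    PhiFn H s ≤ (H - 1 / 2)⁻¹ * shiftedPower (H - 1 / 2) (H - 1 / 2) s := by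
  have := setIntegral_Ioo_le_of_le_rpow (by linarith) hs (integrableOn_phiKernel hH.le hs)
    fun w hw => phiKernel_le_rpow_sub_three_halves hH.le hw.1 hw.2.le
  rw [show H - 3 / 2 + 1 = H - 1 / 2 by ring] at this
  exact this.trans_eq (by rw [shiftedPower]; ring)

lemma hasDerivAt_PhiFn (hH : 1 / 2 ≤ H) (hs : 0 < s) : HasDerivAt (PhiFn H) (phiKernel H s) s :=
  hasDerivAt_setIntegral_Ioo hs (integrableOn_phiKernel hH hs) (continuousOn_phiKernel hH)

lemma abs_PhiFn_le_of_le_one (hH : 1 / 2 ≤ H) (hs : 0 < s) (hs1 : s ≤ 1) :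
    |PhiFn H s| ≤ (H - 1 / 2) * 2 ^ (H - 1 / 2) * s ^ (H + 1 / 2) := by
  have : 0 ≤ H - 1 / 2 := sub_nonneg.2 hH
  rw [abs_of_nonneg (PhiFn_nonneg hH)]
  calc PhiFn H s
      ≤ (H - 1 / 2) * (1 + s) ^ (H - 1 / 2) * (s ^ (H + 1 / 2) / (H + 1 / 2)) :=
        PhiFn_le_rpow_add_half hH hs
    _ ≤ (H - 1 / 2) * 2 ^ (H - 1 / 2) * s ^ (H + 1 / 2) := by
        gcongr
        · linarith
        · exact div_le_self (by positivity) (by linarith)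

lemma abs_deriv_PhiFn_le_of_le_one (hH : 1 / 2 ≤ H) (hs : 0 < s) (hs1 : s ≤ 1) :
    |deriv (PhiFn H) s| ≤ (H - 1 / 2) * 2 ^ (H - 1 / 2) * s ^ (H - 1 / 2) := by
  rw [(hasDerivAt_PhiFn hH hs).deriv, abs_of_nonneg (phiKernel_nonneg hH hs)]
  simpa only [one_add_one_eq_two] using phiKernel_le_rpow_sub_half hH hs hs1

lemma isBigO_PhiFn (hH : 1 / 2 < H) : PhiFn H =O[𝓟 (Ici 1)] fun s => s ^ (2 * H - 1) := by
  have dominating_mem :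
      (H - 1 / 2)⁻¹ • shiftedPower (H - 1 / 2) (H - 1 / 2) ∈ shiftedPowerSpan (2 * H - 1) :=
    Submodule.smul_mem _ _ (shiftedPower_mem_span (by linarith))
  refine .trans (.of_bound' ?_) (isBigO_of_mem_shiftedPowerSpan dominating_mem)
  refine eventually_principal.2 fun s (hs : 1 ≤ s) => ?_
  rw [Real.norm_of_nonneg (PhiFn_nonneg hH.le)]
  exact (PhiFn_le_shiftedPower hH (by linarith)).trans (Real.le_norm_self _)

lemma contDiffOn_PhiFn (hH : 1 / 2 ≤ H) : ContDiffOn ℝ (⊤ : ℕ∞) (PhiFn H) (Ioi 0) := by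
  refine (contDiffOn_infty_iff_deriv_of_isOpen isOpen_Ioi).2 ⟨fun s hs => ?_, ?_⟩
  · exact (hasDerivAt_PhiFn hH hs).differentiableAt.differentiableWithinAt
  · exact (contDiffOn_of_mem_shiftedPowerSpan (phiKernel_mem_shiftedPowerSpan hH)).congr
      fun s hs => (hasDerivAt_PhiFn hH hs).deriv

lemma PhiIter_succ_mem_shiftedPowerSpan (hH : 1 / 2 ≤ H) (n : ℕ) :
    PhiIter H (n + 1) ∈ shiftedPowerSpan (2 * H - 1) := by
  induction n with
  | zero =>
    have := one_add_mul_mem_shiftedPowerSpan (phiKernel_mem_shiftedPowerSpan hH)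
    rw [show 2 * H - 2 + 1 = 2 * H - 1 by ring] at this
    refine mem_shiftedPowerSpan_congr this fun s hs => ?_
    rw [← (hasDerivAt_PhiFn hH hs).deriv, PhiIter, PhiIter]
  | succ n ih =>
    have := one_add_mul_mem_shiftedPowerSpan (deriv_mem_shiftedPowerSpan ih)
    rwa [sub_add_cancel] at this

lemma contDiffOn_PhiIter (hH : 1 / 2 ≤ H) : ∀ n, ContDiffOn ℝ (⊤ : ℕ∞) (PhiIter H n) (Ioi 0)
  | 0 => contDiffOn_PhiFn hH
  | n + 1 => contDiffOn_of_mem_shiftedPowerSpan (PhiIter_succ_mem_shiftedPowerSpan hH n)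

lemma isBigO_PhiIter (hH : 1 / 2 < H) :
    ∀ n, PhiIter H n =O[𝓟 (Ici 1)] fun s => s ^ (2 * H - 1)
  | 0 => isBigO_PhiFn hH
  | n + 1 => isBigO_of_mem_shiftedPowerSpan (PhiIter_succ_mem_shiftedPowerSpan hH.le n)

end Phi

theorem PhiFn_estimates_general (H : ℝ) (h1 : 1/2 < H) :
    (∀ s : ℝ, 0 < s →
      IntegrableOn (fun w => w ^ (H - 3/2) * ((1 + w) ^ (H - 1/2) - 1)) (Ioo (0:ℝ) s)) ∧
    (∃ C : ℝ, 0 < C ∧ ∀ s : ℝ, 0 < s → s ≤ 1 →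
      |PhiFn H s| ≤ C * s ^ (H + 1/2) ∧ |deriv (PhiFn H) s| ≤ C * s ^ (H - 1/2)) ∧
    (∀ n : ℕ, ContDiffOn ℝ (⊤ : ℕ∞) (PhiIter H n) (Ioi 0) ∧
      ∃ Cn : ℝ, 0 < Cn ∧ ∀ s : ℝ, 1 ≤ s → |PhiIter H n s| ≤ Cn * s ^ (2*H - 1)) := by
  refine ⟨fun s hs => integrableOn_phiKernel h1.le hs,
    ⟨(H - 1 / 2) * 2 ^ (H - 1 / 2), mul_pos (sub_pos.2 h1) (by positivity), fun s hs hs1 => ?_⟩,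
    fun n => ⟨contDiffOn_PhiIter h1.le n, ?_⟩⟩
  · exact ⟨abs_PhiFn_le_of_le_one h1.le hs hs1, abs_deriv_PhiFn_le_of_le_one h1.le hs hs1⟩
  · obtain ⟨C, hC, hbound⟩ := (isBigO_PhiIter h1 n).exists_pos
    refine ⟨C, hC, fun s hs => ?_⟩
    have hpow : 0 ≤ s ^ (2 * H - 1) := Real.rpow_nonneg (zero_le_one.trans hs) _
    simpa only [Real.norm_eq_abs, abs_of_nonneg hpow] using isBigOWith_principal.1 hbound s hs

/-- Estimates for the function `Φ` near `0` and of its iterates `((1+s)∂ₛ)ⁿΦ` at infinity. -/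
theorem PhiFn_estimates (H : ℝ) (h1 : 1/2 < H) (h2 : H < 1) :
    (∀ s : ℝ, 0 < s →
      IntegrableOn (fun w => w ^ (H - 3/2) * ((1 + w) ^ (H - 1/2) - 1)) (Ioo (0:ℝ) s)) ∧
    (∃ C : ℝ, 0 < C ∧ ∀ s : ℝ, 0 < s → s ≤ 1 →
      |PhiFn H s| ≤ C * s ^ (H + 1/2) ∧ |deriv (PhiFn H) s| ≤ C * s ^ (H - 1/2)) ∧
    (∀ n : ℕ, ContDiffOn ℝ (⊤ : ℕ∞) (PhiIter H n) (Ioi 0) ∧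
      ∃ Cn : ℝ, 0 < Cn ∧ ∀ s : ℝ, 1 ≤ s → |PhiIter H n s| ≤ Cn * s ^ (2*H - 1)) :=
  PhiFn_estimates_general H h1
end
end
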